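/- Let L, N be a lightlike frame along the unit-speed spacelike curve γ̂ with α_L(0) ≠ 0, set x_L = γ̂(0) + L(0)/α_L(0), g_L(u) = ⟨γ̂(u) − x_L, γ̂(u) − x_L⟩ and β_L(u) = ⟨L(u), γ̂(u) − x_L⟩. If g_L^{(l)}(0) = 0 for l = 1, …, k, then β_L^{(l)}(0) = 0 for l = 1, …, k. -/

import Mathlib

open scoped Topology

noncomputable section

/-- Points/vectors of Lorentz–Minkowski 3-space `ℝ³₁`. -/
abbrev R3 : Type := Fin 3 → ℝ

/-- The Lorentz–Minkowski scalar product `⟨x,y⟩ = -x₀y₀ + x₁y₁ + x₂y₂`. -/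
def mink (x y : R3) : ℝ := -(x 0 * y 0) + x 1 * y 1 + x 2 * y 2

/-- `(L, N)` is a lightlike frame along the unit-speed spacelike curve `γ` on `I`:
`γ, L, N` are smooth on `I`, `⟨e,e⟩ = 1` (with `e = γ'`), `⟨e,L⟩ = ⟨e,N⟩ = 0`,
`⟨L,L⟩ = ⟨N,N⟩ = 0` and `⟨L,N⟩ = 1` on `I`. -/
structure LightlikeFrame (I : Set ℝ) (γ L N : ℝ → R3) : Prop where
  smooth_gamma : ContDiffOn ℝ (⊤ : ℕ∞) γ I
  smooth_L : ContDiffOn ℝ (⊤ : ℕ∞) L I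
  smooth_N : ContDiffOn ℝ (⊤ : ℕ∞) N I
  unit_speed : ∀ u ∈ I, mink (deriv γ u) (deriv γ u) = 1
  eL : ∀ u ∈ I, mink (deriv γ u) (L u) = 0
  eN : ∀ u ∈ I, mink (deriv γ u) (N u) = 0
  LL : ∀ u ∈ I, mink (L u) (L u) = 0
  NN : ∀ u ∈ I, mink (N u) (N u) = 0
  LN : ∀ u ∈ I, mink (L u) (N u) = 1

/-- `α_L = ⟨γ'', L⟩`. -/
def alphaL (γ L : ℝ → R3) (u : ℝ) : ℝ := mink (deriv (deriv γ) u) (L u)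

/-- `α_N = ⟨γ'', N⟩`. -/
def alphaN (γ N : ℝ → R3) (u : ℝ) : ℝ := mink (deriv (deriv γ) u) (N u)

/-- `α_G = ⟨L, N'⟩`. -/
def alphaG (L N : ℝ → R3) (u : ℝ) : ℝ := mink (L u) (deriv N u)

/-- `σ_L = α_L' + α_L α_G`. -/
def sigmaL (γ L N : ℝ → R3) (u : ℝ) : ℝ :=
  deriv (alphaL γ L) u + alphaL γ L u * alphaG L N u

/-- `σ_N = α_N' - α_N α_G`. -/
def sigmaN (γ L N : ℝ → R3) (u : ℝ) : ℝ :=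
  deriv (alphaN γ N) u - alphaN γ N u * alphaG L N u

open scoped ContDiff

/-- A linear first-order equation `f' = p h + q f` propagates vanishing of the jet of `h` at `x`
to the jet of `f` at `x`, one order higher. -/
theorem iteratedDeriv_eq_zero_of_deriv_eventuallyEq {f h p q : ℝ → ℝ} {x : ℝ} {k : ℕ}
    (hf : ContDiffAt ℝ ∞ f x) (hh : ContDiffAt ℝ ∞ h x)
    (hp : ContDiffAt ℝ ∞ p x) (hq : ContDiffAt ℝ ∞ q x)
    (hderiv : deriv f =ᶠ[𝓝 x] p * h + q * f) (hfx : f x = 0)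
    (hhx : ∀ j < k, iteratedDeriv j h x = 0) {l : ℕ} (hl : l ≤ k) :
    iteratedDeriv l f x = 0 := by
  induction l using Nat.strong_induction_on with
  | _ l ih =>
    rcases l with _ | l
    · simpa using hfx
    have hle : ((l : ℕ∞) : WithTop ℕ∞) ≤ ∞ := by exact_mod_cast le_top
    have hf' := hf.of_le hle
    have hh' := hh.of_le hle
    have hp' := hp.of_le hle
    have hq' := hq.of_le hle
    rw [iteratedDeriv_succ', hderiv.iteratedDeriv_eq,
      iteratedDeriv_add (f := p * h) (g := q * f) (hp'.mul hh') (hq'.mul hf'),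
      iteratedDeriv_mul hp' hh', iteratedDeriv_mul hq' hf',
      Finset.sum_eq_zero, Finset.sum_eq_zero, add_zero]
    · intro i _
      rw [ih (l - i) (by omega) (by omega), mul_zero]
    · intro i _
      rw [hhx (l - i) (by omega), mul_zero]

theorem mink_comm (x y : R3) : mink x y = mink y x := by
  simp only [mink]
  ring

theorem HasDerivAt.mink {f g : ℝ → R3} {f' g' : R3} {u : ℝ}
    (hf : HasDerivAt f f' u) (hg : HasDerivAt g g' u) :
    HasDerivAt (fun t => mink (f t) (g t)) (mink f' (g u) + mink (f u) g') u := by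
  have hf := hasDerivAt_pi.1 hf
  have hg := hasDerivAt_pi.1 hg
  refine (((((hf 0).mul (hg 0)).neg).add ((hf 1).mul (hg 1))).add
    ((hf 2).mul (hg 2))).congr_deriv ?_
  simp only [_root_.mink]
  ring

theorem ContDiffAt.mink {f g : ℝ → R3} {n : WithTop ℕ∞} {u : ℝ}
    (hf : ContDiffAt ℝ n f u) (hg : ContDiffAt ℝ n g u) :
    ContDiffAt ℝ n (fun t => mink (f t) (g t)) u := by
  have hf := contDiffAt_pi.1 hf
  have hg := contDiffAt_pi.1 hg
  exact ((((hf 0).mul (hg 0)).neg).add ((hf 1).mul (hg 1))).add ((hf 2).mul (hg 2))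

/-- A vector orthogonal to all members of a lightlike frame vanishes. -/
theorem eq_zero_of_mink_frame_eq_zero {e l n z : R3} (hee : mink e e = 1) (hel : mink e l = 0)
    (hen : mink e n = 0) (hll : mink l l = 0) (hnn : mink n n = 0) (hln : mink l n = 1)
    (hze : mink z e = 0) (hzl : mink z l = 0) (hzn : mink z n = 0) : z = 0 := by
  set d := e 0 * (l 1 * n 2 - l 2 * n 1) - e 1 * (l 0 * n 2 - l 2 * n 0)
    + e 2 * (l 0 * n 1 - l 1 * n 0) with hd
  have hgram : d ^ 2 = -(mink e e * (mink l l * mink n n - mink l n ^ 2)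
      - mink e l * (mink e l * mink n n - mink l n * mink e n)
      + mink e n * (mink e l * mink l n - mink l l * mink e n)) := by
    simp only [hd, mink]
    ring
  have hd0 : d ≠ 0 := by
    intro h
    simp [hee, hel, hen, hll, hnn, hln, h] at hgram
  simp only [mink] at hze hzl hzn
  have h0 : d * z 0 = 0 := by
    linear_combination (-(l 1 * n 2 - l 2 * n 1)) * hze + (e 1 * n 2 - e 2 * n 1) * hzl
      - (e 1 * l 2 - e 2 * l 1) * hzn
  have h1 : d * z 1 = 0 := by
    linear_combination (-(l 0 * n 2 - l 2 * n 0)) * hze + (e 0 * n 2 - e 2 * n 0) * hzl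
      - (e 0 * l 2 - e 2 * l 0) * hzn
  have h2 : d * z 2 = 0 := by
    linear_combination (l 0 * n 1 - l 1 * n 0) * hze - (e 0 * n 1 - e 1 * n 0) * hzl
      + (e 0 * l 1 - e 1 * l 0) * hzn
  ext i
  fin_cases i
  · exact (mul_eq_zero.1 h0).resolve_left hd0
  · exact (mul_eq_zero.1 h1).resolve_left hd0
  · exact (mul_eq_zero.1 h2).resolve_left hd0

/-- Expansion in a lightlike frame of a vector orthogonal to its first lightlike member. -/
theorem eq_smul_add_smul_of_mink_eq_zero {e l n v : R3} (hee : mink e e = 1)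
    (hel : mink e l = 0) (hen : mink e n = 0) (hll : mink l l = 0) (hnn : mink n n = 0)
    (hln : mink l n = 1) (hvl : mink v l = 0) : v = mink v e • e + mink v n • l := by
  rw [← sub_eq_zero]
  have hsub : ∀ y, mink (v - (mink v e • e + mink v n • l)) y
      = mink v y - mink v e * mink e y - mink v n * mink l y := by
    intro y
    simp only [mink, Pi.sub_apply, Pi.add_apply, Pi.smul_apply, smul_eq_mul]
    ring
  refine eq_zero_of_mink_frame_eq_zero hee hel hen hll hnn hln ?_ ?_ ?_ <;> rw [hsub]
  · rw [hee, mink_comm l e, hel]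
    ring
  · rw [hvl, hel, hll]
    ring
  · rw [hen, hln]
    ring

namespace LightlikeFrame

variable {I : Set ℝ} {γ L N : ℝ → R3} {u : ℝ}

theorem contDiffOn_deriv_gamma (h : LightlikeFrame I γ L N) (hI : IsOpen I) :
    ContDiffOn ℝ ∞ (deriv γ) I :=
  h.smooth_gamma.deriv_of_isOpen hI (by simp)

theorem hasDerivAt_gamma (h : LightlikeFrame I γ L N) (hI : IsOpen I) (hu : u ∈ I) :
    HasDerivAt γ (deriv γ u) u :=
  ((h.smooth_gamma.contDiffAt (hI.mem_nhds hu)).differentiableAt (by simp)).hasDerivAt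

theorem hasDerivAt_L (h : LightlikeFrame I γ L N) (hI : IsOpen I) (hu : u ∈ I) :
    HasDerivAt L (deriv L u) u :=
  ((h.smooth_L.contDiffAt (hI.mem_nhds hu)).differentiableAt (by simp)).hasDerivAt

theorem mink_deriv_L_L (h : LightlikeFrame I γ L N) (hI : IsOpen I) (hu : u ∈ I) :
    mink (deriv L u) (L u) = 0 := by
  have hL := h.hasDerivAt_L hI hu
  have heq : (fun t => mink (L t) (L t)) =ᶠ[𝓝 u] fun _ => 0 :=
    Filter.eventually_of_mem (hI.mem_nhds hu) h.LL
  have := (hL.mink hL).unique ((hasDerivAt_const u (0 : ℝ)).congr_of_eventuallyEq heq)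
  rw [mink_comm (L u)] at this
  linarith

theorem mink_deriv_L_deriv_gamma (h : LightlikeFrame I γ L N) (hI : IsOpen I) (hu : u ∈ I) :
    mink (deriv L u) (deriv γ u) = -alphaL γ L u := by
  have he : HasDerivAt (deriv γ) (deriv (deriv γ) u) u :=
    (((h.contDiffOn_deriv_gamma hI).contDiffAt (hI.mem_nhds hu)).differentiableAt
      (by simp)).hasDerivAt
  have heq : (fun t => mink (deriv γ t) (L t)) =ᶠ[𝓝 u] fun _ => 0 :=
    Filter.eventually_of_mem (hI.mem_nhds hu) h.eL
  have := (he.mink (h.hasDerivAt_L hI hu)).unique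
    ((hasDerivAt_const u (0 : ℝ)).congr_of_eventuallyEq heq)
  rw [mink_comm (deriv γ u)] at this
  rw [alphaL]
  linarith

theorem deriv_mink_sub_self (h : LightlikeFrame I γ L N) (hI : IsOpen I) (hu : u ∈ I) (x : R3) :
    deriv (fun t => mink (γ t - x) (γ t - x)) u = 2 * mink (deriv γ u) (γ u - x) := by
  have hw := (h.hasDerivAt_gamma hI hu).sub_const x
  rw [(hw.mink hw).deriv, mink_comm (γ u - x)]
  ring

/-- `β' = -(α_L / 2) g' + ⟨L', N⟩ β` for `β = ⟨L, γ - x⟩` and `g = ⟨γ - x, γ - x⟩`. -/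
theorem deriv_mink_L_sub (h : LightlikeFrame I γ L N) (hI : IsOpen I) (hu : u ∈ I) (x : R3) :
    deriv (fun t => mink (L t) (γ t - x)) u
      = -alphaL γ L u / 2 * deriv (fun t => mink (γ t - x) (γ t - x)) u
        + mink (deriv L u) (N u) * mink (L u) (γ u - x) := by
  have hL' := eq_smul_add_smul_of_mink_eq_zero (h.unit_speed u hu) (h.eL u hu) (h.eN u hu)
    (h.LL u hu) (h.NN u hu) (h.LN u hu) (h.mink_deriv_L_L hI hu)
  have hexp : mink (deriv L u) (γ u - x)
      = mink (deriv L u) (deriv γ u) * mink (deriv γ u) (γ u - x)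
        + mink (deriv L u) (N u) * mink (L u) (γ u - x) := by
    conv_lhs => rw [hL']
    generalize mink (deriv L u) (deriv γ u) = c
    generalize mink (deriv L u) (N u) = d
    simp only [mink, Pi.add_apply, Pi.smul_apply, smul_eq_mul]
    ring
  rw [((h.hasDerivAt_L hI hu).mink ((h.hasDerivAt_gamma hI hu).sub_const x)).deriv,
    h.deriv_mink_sub_self hI hu, hexp, h.mink_deriv_L_deriv_gamma hI hu,
    mink_comm (L u) (deriv γ u), h.eL u hu]
  ring

end LightlikeFrame

/-- With `x_L = γ̂(0) + L(0)/α_L(0)`,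
`g_L(u) = ⟨γ̂(u) - x_L, γ̂(u) - x_L⟩` and `β_L(u) = ⟨L(u), γ̂(u) - x_L⟩`:
if `g_L⁽ˡ⁾(0) = 0` for `l = 1, …, k`, then `β_L⁽ˡ⁾(0) = 0` for `l = 1, …, k`. -/
theorem beta_derivatives_vanish (a b : ℝ) (γ L N : ℝ → R3)
    (hframe : LightlikeFrame (Set.Ioo a b) γ L N)
    (h0 : (0 : ℝ) ∈ Set.Ioo a b)
    (hαL : alphaL γ L 0 ≠ 0) (k : ℕ)
    (hg : ∀ l : ℕ, 1 ≤ l → l ≤ k →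
      deriv^[l] (fun u => mink (γ u - (γ 0 + (alphaL γ L 0)⁻¹ • L 0))
                               (γ u - (γ 0 + (alphaL γ L 0)⁻¹ • L 0))) 0 = 0) :
    ∀ l : ℕ, 1 ≤ l → l ≤ k →
      deriv^[l] (fun u => mink (L u) (γ u - (γ 0 + (alphaL γ L 0)⁻¹ • L 0))) 0 = 0 := by
  intro l _ hlk
  set x := γ 0 + (alphaL γ L 0)⁻¹ • L 0 with hx
  have hI : IsOpen (Set.Ioo a b) := isOpen_Ioo
  have hnhds := hI.mem_nhds h0
  have hγ : ContDiffAt ℝ ∞ γ 0 := hframe.smooth_gamma.contDiffAt hnhds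
  have hL : ContDiffAt ℝ ∞ L 0 := hframe.smooth_L.contDiffAt hnhds
  have hN : ContDiffAt ℝ ∞ N 0 := hframe.smooth_N.contDiffAt hnhds
  have hL' : ContDiffAt ℝ ∞ (deriv L) 0 :=
    (hframe.smooth_L.deriv_of_isOpen hI (by simp)).contDiffAt hnhds
  have he := hframe.contDiffOn_deriv_gamma hI
  have he' : ContDiffAt ℝ ∞ (deriv (deriv γ)) 0 :=
    (he.deriv_of_isOpen hI (by simp)).contDiffAt hnhds
  have hw : ContDiffAt ℝ ∞ (fun t => γ t - x) 0 := hγ.sub contDiffAt_const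
  have hg' : ContDiffAt ℝ ∞ (deriv fun t => mink (γ t - x) (γ t - x)) 0 := by
    refine (contDiffAt_const (c := (2 : ℝ)).mul
      ((he.contDiffAt hnhds).mink hw)).congr_of_eventuallyEq ?_
    filter_upwards [hnhds] with u hu using hframe.deriv_mink_sub_self hI hu x
  rw [← iteratedDeriv_eq_iterate]
  refine iteratedDeriv_eq_zero_of_deriv_eventuallyEq (k := k)
    (p := fun u => -alphaL γ L u / 2) (q := fun u => mink (deriv L u) (N u))
    (hL.mink hw) hg' ((he'.mink hL).neg.div_const 2) (hL'.mink hN) ?_ ?_ ?_ hlk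
  · filter_upwards [hnhds] with u hu using hframe.deriv_mink_L_sub hI hu x
  · have hLL := hframe.LL 0 h0
    simp only [mink] at hLL
    simp only [hx, mink, Pi.sub_apply, Pi.add_apply, Pi.smul_apply, smul_eq_mul]
    linear_combination (-(alphaL γ L 0)⁻¹) * hLL
  · intro j hj
    rw [← iteratedDeriv_succ', iteratedDeriv_eq_iterate]
    exact hg (j + 1) (by omega) hj
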